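/- arXiv:math/0608461 — 2 statements merged into one kernel-verified Lean document; each statement's English description precedes it below -/
import Mathlib

section
/- Let W be a real Banach space, let I denote the identity operator on W, and let C : W → W be a continuous linear operator such that C² = C∘C is a compact operator. Then the range of I + C is a closed subspace of W. -/
open Filter Topology in
lemma stmt6_aux {W : Type*} [NormedAddCommGroup W] [NormedSpace ℝ W]
    (C : W →L[ℝ] W) (hC : IsCompactOperator ⇑(C ∘L C)) (x : ℕ → W) (R : ℝ)
    (hR : ∀ n, ‖x n‖ ≤ R) (y : W)
    (hy : Tendsto (fun n => (ContinuousLinearMap.id ℝ W + C) (x n)) atTop (𝓝 y)) :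
    ∃ z : W, ∃ φ : ℕ → ℕ, StrictMono φ ∧ Tendsto (fun n => x (φ n)) atTop (𝓝 z) ∧
      (ContinuousLinearMap.id ℝ W + C) z = y := by
  obtain ⟨K, hK, hsub⟩ := IsCompactOperator.image_closedBall_subset_compact
    (f := ((C ∘L C : W →L[ℝ] W) : W →ₗ[ℝ] W)) hC R
  have hmem : ∀ n, C (C (x n)) ∈ K := fun n =>
    hsub ⟨x n, by simpa using hR n, rfl⟩
  obtain ⟨a, -, φ, hφ, ha⟩ := hK.tendsto_subseq hmem
  have hy' := hy.comp hφ.tendsto_atTop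
  have h1 : Tendsto (fun n => x (φ n)) atTop (𝓝 (y - C y + a)) := by
    have h2 := (hy'.sub ((C.continuous.tendsto y).comp hy')).add ha
    refine h2.congr fun n => ?_
    simp
    abel
  refine ⟨_, φ, hφ, h1, ?_⟩
  exact tendsto_nhds_unique
    (((ContinuousLinearMap.id ℝ W + C).continuous.tendsto _).comp h1) hy'

lemma stmt6_min {W : Type*} [NormedAddCommGroup W] [NormedSpace ℝ W]
    (T : W →L[ℝ] W) (x : W) (hx : T x ≠ 0) :
    ∃ x', T x' = T x ∧ ∀ w, T w = T x → ‖x'‖ ≤ 2 * ‖w‖ := by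
  have hcl : IsClosed (T ⁻¹' {T x}) := isClosed_singleton.preimage T.continuous
  have hne : (T ⁻¹' {T x}).Nonempty := ⟨x, rfl⟩
  have hpos : 0 < Metric.infDist 0 (T ⁻¹' {T x}) := by
    refine (hcl.notMem_iff_infDist_pos hne).1 ?_
    intro h
    apply hx
    have h' : T 0 = T x := h
    rw [← h', map_zero]
  obtain ⟨x', h1, h2⟩ := (Metric.infDist_lt_iff hne).1
    (show Metric.infDist 0 (T ⁻¹' {T x}) < 2 * Metric.infDist 0 (T ⁻¹' {T x}) by linarith)
  refine ⟨x', h1, fun w hw => ?_⟩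
  have h3 := Metric.infDist_le_dist_of_mem (x := (0 : W)) (show w ∈ T ⁻¹' {T x} from hw)
  rw [dist_zero_left] at h2 h3
  linarith

open Filter Topology in
lemma stmt6_bound {W : Type*} [NormedAddCommGroup W] [NormedSpace ℝ W]
    (C : W →L[ℝ] W) (hC : IsCompactOperator ⇑(C ∘L C)) :
    ∃ c : ℝ, 0 ≤ c ∧ ∀ x, ∃ x', (ContinuousLinearMap.id ℝ W + C) x' =
      (ContinuousLinearMap.id ℝ W + C) x ∧ ‖x'‖ ≤ c * ‖(ContinuousLinearMap.id ℝ W + C) x‖ := by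
  have haux := stmt6_aux C hC
  generalize ContinuousLinearMap.id ℝ W + C = T at *
  by_contra! hcon
  have key : ∀ n : ℕ, ∃ z, ‖z‖ = 1 ∧ ‖T z‖ ≤ 1 / ((n : ℝ) + 1) ∧
      ∀ w, T w = T z → 1 ≤ 2 * ‖w‖ := by
    intro n
    obtain ⟨x, hx⟩ := hcon (n + 1) (by positivity)
    have hx0 : T x ≠ 0 := by
      intro h
      have := hx 0 (by simp [h])
      simp [h] at this
    obtain ⟨x', h1, h2⟩ := stmt6_min T x hx0
    have h3 := hx x' h1
    have hp : 0 < ‖x'‖ := lt_of_le_of_lt (by positivity) h3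
    refine ⟨‖x'‖⁻¹ • x', ?_, ?_, ?_⟩
    · rw [norm_smul, norm_inv, norm_norm, inv_mul_cancel₀ hp.ne']
    · rw [map_smul, h1, norm_smul, norm_inv, norm_norm, inv_mul_eq_div,
        div_le_div_iff₀ hp (by positivity)]
      linarith
    · intro w hw
      have h4 := h2 (‖x'‖ • w) (by rw [map_smul, hw, map_smul, smul_inv_smul₀ hp.ne', h1])
      rw [norm_smul, norm_norm] at h4
      by_contra! h5
      nlinarith
  choose z hz1 hz2 hz3 using key
  have hT : Tendsto (fun n => T (z n)) atTop (𝓝 0) :=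
    squeeze_zero_norm hz2 tendsto_one_div_add_atTop_nhds_zero_nat
  obtain ⟨y, φ, -, hy, hTy⟩ := haux z 1 (fun n => (hz1 n).le) 0 hT
  have h6 : Tendsto (fun n => 2 * ‖z (φ n) - y‖) atTop (𝓝 (2 * ‖y - y‖)) :=
    ((hy.sub_const y).norm).const_mul 2
  have h7 := ge_of_tendsto' h6 (fun n => hz3 (φ n) (z (φ n) - y) (by simp [hTy]))
  norm_num at h7

/-- if `W` is a real Banach space and `C : W → W` is a continuous linear
operator such that `C² = C ∘ C` is compact, then the range of `I + C` is a closed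
subspace of `W`. -/
theorem stmt6 (W : Type*) [NormedAddCommGroup W] [NormedSpace ℝ W] [CompleteSpace W]
    (C : W →L[ℝ] W) (hC : IsCompactOperator ⇑(C ∘L C)) :
    IsClosed (Set.range ⇑(ContinuousLinearMap.id ℝ W + C)) := by
  obtain ⟨c, hc, hb⟩ := stmt6_bound C hC
  have haux := stmt6_aux C hC
  generalize ContinuousLinearMap.id ℝ W + C = T at *
  refine isClosed_of_closure_subset fun y hy => ?_
  obtain ⟨u, hu, hlim⟩ := mem_closure_iff_seq_limit.1 hy
  choose v hv using hu
  choose x hx1 hx2 using fun n => hb (v n)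
  obtain ⟨R, hR⟩ := hlim.norm.bddAbove_range
  have hR' : ∀ n, ‖u n‖ ≤ R := fun n => hR ⟨n, rfl⟩
  obtain ⟨z, -, -, -, hz⟩ := haux x (c * R)
    (fun n => (hx2 n).trans (by rw [hv]; exact mul_le_mul_of_nonneg_left (hR' n) hc)) y
    (hlim.congr fun n => by rw [hx1, hv])
  exact ⟨z, hz⟩
end

section
/- Assume a, d ∈ L^∞((0,1);ℝ), b, c : [0,1] → ℝ of bounded variation, and |r₀r₁| ≠ e^{α(1)+δ(1)}. Then the set of integers k ∈ ℤ for which there exists a pair (u,v) ≠ (0,0) of absolutely continuous functions [0,1] → ℂ satisfying u'(x) + (a(x) + ikω) u(x) + b(x) v(x) = 0 and v'(x) − (d(x) + ikω) v(x) + c(x) u(x) = 0 for almost every x ∈ (0,1), together with u(0) = r₀ v(0) and v(1) = r₁ u(1), is finite. -/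
open MeasureTheory Set

/-- `u` is absolutely continuous on `[0,1]` with (a.e.) derivative `u'`:
`u'` is integrable on `[0,1]` and `u` is the integral of `u'` there. -/
def IsACOn01 (u u' : ℝ → ℂ) : Prop :=
  IntervalIntegrable u' volume 0 1 ∧
  ∀ x ∈ Icc (0 : ℝ) 1, u x = u 0 + ∫ y in (0 : ℝ)..x, u' y

open Filter Topology intervalIntegral

lemma ac_of_integral {f' : ℝ → ℂ} (h : IntervalIntegrable f' volume 0 1) (z : ℂ) :
    AbsolutelyContinuousOnInterval (fun x ↦ z + ∫ y in (0:ℝ)..x, f' y) 0 1 := by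
  have hre : IntervalIntegrable (fun x ↦ (f' x).re) volume 0 1 := ⟨h.1.re, h.2.re⟩
  have him : IntervalIntegrable (fun x ↦ (f' x).im) volume 0 1 := ⟨h.1.im, h.2.im⟩
  have h1 := hre.absolutelyContinuousOnInterval_intervalIntegral (c := 0) (by simp)
  have h2 := him.absolutelyContinuousOnInterval_intervalIntegral (c := 0) (by simp)
  have hc (w : ℂ) : AbsolutelyContinuousOnInterval (fun _ : ℝ ↦ w) 0 1 :=
    (LipschitzWith.const w).lipschitzOnWith.absolutelyContinuousOnInterval (K := 0)
  have h3 := ((hc z).add (h1.smul (hc 1))).add (h2.smul (hc Complex.I))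
  rw [absolutelyContinuousOnInterval_iff] at h3 ⊢
  intro ε hε
  obtain ⟨δ, hδ, H⟩ := h3 ε hε
  refine ⟨δ, hδ, fun E hE hE' ↦ ?_⟩
  refine lt_of_eq_of_lt (Finset.sum_congr rfl fun i hi ↦ ?_) (H E hE hE')
  have key : ∀ x ∈ uIcc (0:ℝ) 1, z + ∫ y in (0:ℝ)..x, f' y
      = z + (∫ y in (0:ℝ)..x, (f' y).re) • (1:ℂ) + (∫ y in (0:ℝ)..x, (f' y).im) • Complex.I := by
    intro x hx
    have hsub : uIcc 0 x ⊆ uIcc (0:ℝ) 1 := uIcc_subset_uIcc (by simp) hx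
    have hi := h.mono_set hsub
    rw [add_assoc]
    congr 1
    apply Complex.ext
    · simpa using (Complex.reCLM.intervalIntegral_comp_comm hi).symm
    · simpa using (Complex.imCLM.intervalIntegral_comp_comm hi).symm
  have hm := hE.1 i hi
  rw [key _ hm.1, key _ hm.2]
  rfl

lemma hasDeriv_of_integral {f' : ℝ → ℂ} (h : IntervalIntegrable f' volume 0 1) (z : ℂ) :
    ∀ᵐ x, x ∈ uIcc (0:ℝ) 1 → HasDerivAt (fun x ↦ z + ∫ y in (0:ℝ)..x, f' y) (f' x) x := by
  filter_upwards [h.ae_hasDerivAt_integral] with x hx hx'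
  exact (hx hx' 0 (by simp)).const_add z

lemma isAC_of {f f' : ℝ → ℂ} (h : IntervalIntegrable f' volume 0 1)
    (hf : AbsolutelyContinuousOnInterval f 0 1)
    (hd : ∀ᵐ x, x ∈ uIcc (0:ℝ) 1 → HasDerivAt f (f' x) x) : IsACOn01 f f' := by
  refine ⟨h, ?_⟩
  have h1 := hf.sub (ac_of_integral h 0)
  obtain ⟨C, hC⟩ := h1.const_of_ae_hasDerivAt_zero (by
    filter_upwards [hd, hasDeriv_of_integral h 0] with x hx hx' hxm
    simpa using (hx hxm).sub (hx' hxm))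
  intro x hx
  rw [← uIcc_of_le zero_le_one] at hx
  have e1 := hC x hx
  have e2 := hC 0 (by simp)
  simp at e1 e2
  rw [e2, ← e1]; ring

lemma IsACOn01.cont {f f' : ℝ → ℂ} (h : IsACOn01 f f') : ContinuousOn f (Icc 0 1) := by
  have := (ac_of_integral h.1 (f 0)).continuousOn
  rw [uIcc_of_le zero_le_one] at this
  exact this.congr h.2

lemma ae_Ioo {p : ℝ → Prop} : (∀ᵐ x ∂(volume.restrict (Ioo (0 : ℝ) 1)), p x) ↔
    ∀ᵐ x, x ∈ uIoc (0:ℝ) 1 → p x := by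
  rw [uIoc_of_le zero_le_one, ← ae_restrict_iff' measurableSet_Ioc,
    Measure.restrict_congr_set Ioo_ae_eq_Ioc]

lemma IsACOn01.congr {f f' g' : ℝ → ℂ} (h : IsACOn01 f f')
    (hg : ∀ᵐ x, x ∈ uIoc (0:ℝ) 1 → f' x = g' x) : IsACOn01 f g' := by
  refine ⟨h.1.congr_ae ((ae_restrict_iff' measurableSet_uIoc).2 hg), fun x hx ↦ ?_⟩
  rw [h.2 x hx]
  congr 1
  apply intervalIntegral.integral_congr_ae
  filter_upwards [hg] with y hy hy'
  apply hy
  rw [uIoc_of_le hx.1] at hy'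
  rw [uIoc_of_le zero_le_one]
  exact ⟨hy'.1, hy'.2.trans hx.2⟩

lemma IsACOn01.mul {f f' g g' : ℝ → ℂ} (hf : IsACOn01 f f') (hg : IsACOn01 g g') :
    IsACOn01 (fun x ↦ f x * g x) (fun x ↦ f' x * g x + f x * g' x) := by
  have cf := hf.cont
  have cg := hg.cont
  rw [← uIcc_of_le zero_le_one] at cf cg
  have hi : IntervalIntegrable (fun x ↦ f' x * g x + f x * g' x) volume 0 1 :=
    (hf.1.mul_continuousOn cg).add (hg.1.continuousOn_mul cf)
  have := isAC_of (f' := fun x ↦ f' x * g x + f x * g' x) hi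
    ((ac_of_integral hf.1 (f 0)).smul (ac_of_integral hg.1 (g 0))) (by
      filter_upwards [hasDeriv_of_integral hf.1 (f 0), hasDeriv_of_integral hg.1 (g 0)]
        with x h1 h2 hx
      have := (h1 hx).mul (h2 hx)
      rw [uIcc_of_le zero_le_one] at hx
      rw [← hf.2 x hx, ← hg.2 x hx] at this
      exact this)
  refine ⟨hi, fun x hx ↦ ?_⟩
  have h2 := this.2 x hx
  simp only [Pi.smul_apply', smul_eq_mul, integral_same, add_zero] at h2
  rw [← h2, ← hf.2 x hx, ← hg.2 x hx]

lemma isAC_exp {A' : ℝ → ℂ} (hA : Measurable A') {C : ℝ} (hC : ∀ x, ‖A' x‖ ≤ C) :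
    IsACOn01 (fun x ↦ Complex.exp (∫ y in (0:ℝ)..x, A' y))
      (fun x ↦ A' x * Complex.exp (∫ y in (0:ℝ)..x, A' y)) := by
  have hI : ∀ s t, IntervalIntegrable A' volume s t := fun s t ↦ by
    refine (intervalIntegrable_const (c := C)).mono_fun hA.aestronglyMeasurable ?_
    exact Eventually.of_forall fun x ↦ (hC x).trans (le_abs_self C)
  have hC0 : 0 ≤ C := (norm_nonneg _).trans (hC 0)
  have hL : LipschitzWith C.toNNReal (fun x ↦ ∫ y in (0:ℝ)..x, A' y) := by
    refine LipschitzWith.of_dist_le_mul fun x y ↦ ?_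
    rw [dist_eq_norm, integral_interval_sub_left (hI _ _) (hI _ _), Real.coe_toNNReal _ hC0,
      dist_eq_norm, Real.norm_eq_abs]
    exact norm_integral_le_of_norm_le_const fun x _ ↦ hC x
  have hm : MapsTo (fun x ↦ ∫ y in (0:ℝ)..x, A' y) (uIcc 0 1) (Metric.closedBall 0 C) := by
    intro x hx
    rw [uIcc_of_le zero_le_one] at hx
    have := hL.dist_le_mul x 0
    simp only [integral_same, Real.coe_toNNReal _ hC0] at this
    refine this.trans ?_
    rw [dist_zero_right, Real.norm_eq_abs, abs_of_nonneg hx.1]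
    exact mul_le_of_le_one_right hC0 hx.2
  obtain ⟨K, hK⟩ := (Complex.contDiff_exp (𝕜 := ℝ) (n := 1)).contDiffOn.exists_lipschitzOnWith
    (s := Metric.closedBall (0:ℂ) C) (by decide) (convex_closedBall _ _) (isCompact_closedBall _ _)
  refine isAC_of ?_ (hK.comp hL.lipschitzOnWith hm).absolutelyContinuousOnInterval ?_
  · exact (hI 0 1).mul_continuousOn (Complex.continuous_exp.comp hL.continuous).continuousOn
  · filter_upwards [(hI 0 1).ae_hasDerivAt_integral] with x hx hx'
    have := (hx hx' 0 (by simp)).cexp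
    rw [mul_comm] at this
    exact this

lemma bv_facts {b : ℝ → ℝ} (hb : BoundedVariationOn b (Icc (0:ℝ) 1)) :
    (∃ B, ∀ x ∈ Icc (0:ℝ) 1, |b x| ≤ B) ∧ IntervalIntegrable b volume 0 1 := by
  obtain ⟨p, q, hp, hq, rfl⟩ := hb.locallyBoundedVariationOn.exists_monotoneOn_sub_monotoneOn
  have z : (0:ℝ) ∈ Icc (0:ℝ) 1 := by simp
  have o : (1:ℝ) ∈ Icc (0:ℝ) 1 := by simp
  constructor
  · refine ⟨|p 0| + |p 1| + |q 0| + |q 1|, fun x hx ↦ ?_⟩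
    have h1 := hp z hx hx.1
    have h2 := hp hx o hx.2
    have h3 := hq z hx hx.1
    have h4 := hq hx o hx.2
    simp only [Pi.sub_apply]
    rw [abs_le]
    constructor <;> linarith [neg_abs_le (p 0), le_abs_self (p 0), neg_abs_le (p 1),
      le_abs_self (p 1), neg_abs_le (q 0), le_abs_self (q 0), neg_abs_le (q 1), le_abs_self (q 1)]
  · rw [← uIcc_of_le zero_le_one] at hp hq
    exact hp.intervalIntegrable.sub hq.intervalIntegrable

lemma rl_point {β : ℝ → ℂ} {c : ℝ} (hc : c ≠ 0) (x : ℝ) (hx : 0 ≤ x) :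
    Tendsto (fun k : ℤ ↦ ∫ y in (0:ℝ)..x, β y * Complex.exp ((k:ℂ) * c * Complex.I * y))
      cofinite (𝓝 0) := by
  have h := Real.tendsto_integral_exp_smul_cocompact ((Ioc 0 x).indicator β)
  have h1 : Tendsto (fun k : ℤ ↦ (k:ℝ) * (-c / (2 * Real.pi))) cofinite (cocompact ℝ) := by
    have hne : -c / (2 * Real.pi) ≠ 0 := by
      have := Real.pi_pos
      exact div_ne_zero (neg_ne_zero.2 hc) (by positivity)
    exact (Homeomorph.mulRight₀ _ hne).isClosedEmbedding.tendsto_cocompact.comp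
      Int.tendsto_coe_cofinite
  refine (h.comp h1).congr fun k ↦ ?_
  simp only [Function.comp]
  rw [integral_of_le hx, ← MeasureTheory.integral_indicator measurableSet_Ioc]
  congr 1
  ext v
  by_cases hv : v ∈ Ioc 0 x
  · simp only [indicator_of_mem hv]
    rw [Circle.smul_def, Real.fourierChar_apply, smul_eq_mul, mul_comm]
    congr 2
    have : (Real.pi : ℂ) ≠ 0 := by exact_mod_cast Real.pi_ne_zero
    push_cast
    field_simp
  · simp [indicator_of_notMem hv]

lemma norm_osc (k : ℤ) (c y : ℝ) : ‖Complex.exp ((k:ℂ) * c * Complex.I * y)‖ = 1 := by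
  have : (k:ℂ) * c * Complex.I * y = ((k * c * y : ℝ) : ℂ) * Complex.I := by push_cast; ring
  rw [this, Complex.norm_exp_ofReal_mul_I]

lemma osc_int {β : ℝ → ℂ} (hβ : IntervalIntegrable β volume 0 1) (k : ℤ) (c : ℝ) :
    IntervalIntegrable (fun y : ℝ ↦ β y * Complex.exp ((k:ℂ) * c * Complex.I * y)) volume 0 1 :=
  hβ.mul_continuousOn (by fun_prop)

lemma rl_unif {β : ℝ → ℂ} (hβ : IntervalIntegrable β volume 0 1) {K : ℝ}
    (hK : ∀ x ∈ Icc (0:ℝ) 1, ‖β x‖ ≤ K) {c : ℝ} (hc : c ≠ 0) {ε : ℝ} (hε : 0 < ε) :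
    ∀ᶠ k : ℤ in cofinite, ∀ x ∈ Icc (0:ℝ) 1,
      ‖∫ y in (0:ℝ)..x, β y * Complex.exp ((k:ℂ) * c * Complex.I * y)‖ ≤ ε := by
  have hK0 : 0 ≤ K := (norm_nonneg _).trans (hK 0 (by simp))
  obtain ⟨N, hN⟩ := exists_nat_gt (2 * K / ε)
  have hN0 : (0:ℝ) < N := lt_of_le_of_lt (by positivity) hN
  have hfin : ∀ᶠ k : ℤ in cofinite, ∀ i ∈ Finset.range (N+1),
      ‖∫ y in (0:ℝ)..((i:ℝ)/N), β y * Complex.exp ((k:ℂ) * c * Complex.I * y)‖ < ε / 2 := by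
    rw [Filter.eventually_all_finset]
    intro i _
    have := (rl_point (β := β) hc ((i:ℝ)/N) (by positivity)).norm
    rw [norm_zero] at this
    exact this.eventually_lt_const (by positivity)
  filter_upwards [hfin] with k hk x hx
  have hi0 : 0 ≤ x * N := mul_nonneg hx.1 hN0.le
  have hle := Nat.floor_le hi0
  have hlt := Nat.lt_floor_add_one (x * N)
  set i := ⌊x * N⌋₊
  have h1 : (i:ℝ) / N ≤ x := by rw [div_le_iff₀ hN0]; exact hle
  have h0 : 0 ≤ (i:ℝ) / N := by positivity
  have h2 : x - i / N ≤ 1 / N := by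
    rw [sub_le_iff_le_add, ← add_div, le_div_iff₀ hN0]; linarith
  have hiN : i ∈ Finset.range (N+1) := by
    rw [Finset.mem_range, Nat.lt_succ_iff]
    have : (i:ℝ) ≤ N := hle.trans (mul_le_of_le_one_left hN0.le hx.2)
    exact_mod_cast this
  have hosc := osc_int hβ k c
  have m1 : (i:ℝ)/N ∈ Icc (0:ℝ) 1 := ⟨h0, h1.trans hx.2⟩
  have hI1 := hosc.mono_set (c := 0) (d := (i:ℝ)/N)
    (uIcc_subset_uIcc (by simp) (by rwa [uIcc_of_le zero_le_one]))
  have hI2 := hosc.mono_set (c := (i:ℝ)/N) (d := x)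
    (uIcc_subset_uIcc (by rwa [uIcc_of_le zero_le_one]) (by rwa [uIcc_of_le zero_le_one]))
  rw [← integral_add_adjacent_intervals hI1 hI2]
  have hb : ‖∫ y in ((i:ℝ)/N)..x, β y * Complex.exp ((k:ℂ) * c * Complex.I * y)‖
      ≤ K * |x - i/N| := by
    apply intervalIntegral.norm_integral_le_of_norm_le_const
    intro y hy
    rw [uIoc_of_le h1] at hy
    rw [norm_mul, norm_osc, mul_one]
    exact hK y ⟨h0.trans hy.1.le, hy.2.trans hx.2⟩
  rw [abs_of_nonneg (by linarith)] at hb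
  have h3 : K * (x - i / N) ≤ K * (1 / N) := by gcongr
  have h4 : K * (1/N) ≤ ε / 2 := by
    rw [div_lt_iff₀ hε] at hN
    rw [mul_one_div, div_le_iff₀ hN0]; linarith
  have := norm_add_le (∫ y in (0:ℝ)..((i:ℝ)/N), β y * Complex.exp ((k:ℂ) * c * Complex.I * y))
    (∫ y in ((i:ℝ)/N)..x, β y * Complex.exp ((k:ℂ) * c * Complex.I * y))
  linarith [hk i hiN]

/-- One half of the almost-constancy estimate. -/
lemma half_est {U V P Q : ℝ → ℂ} {K ε M : ℝ}
    (hP : IntervalIntegrable P volume 0 1)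
    (hU : IsACOn01 U (fun x ↦ -(P x * V x))) (hV : IsACOn01 V (fun x ↦ -(Q x * U x)))
    (hQK : ∀ x ∈ Icc (0:ℝ) 1, ‖Q x‖ ≤ K) (hε : 0 ≤ ε)
    (hPε : ∀ x ∈ Icc (0:ℝ) 1, ‖∫ y in (0:ℝ)..x, P y‖ ≤ ε)
    (hUM : ∀ x ∈ Icc (0:ℝ) 1, ‖U x‖ ≤ M) (hVM : ∀ x ∈ Icc (0:ℝ) 1, ‖V x‖ ≤ M) :
    ∀ x ∈ Icc (0:ℝ) 1, ‖U x - U 0‖ ≤ ε * (1 + K) * M := by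
  intro x hx
  have hM0 : 0 ≤ M := (norm_nonneg _).trans (hUM 0 (by simp))
  have hK0 : 0 ≤ K := (norm_nonneg _).trans (hQK 0 (by simp))
  have hE : IsACOn01 (fun x ↦ ∫ y in (0:ℝ)..x, P y) P := ⟨hP, fun x _ ↦ by simp⟩
  have h1 := (hE.mul hV).2 x hx
  have h2 := hU.2 x hx
  have hsub : uIcc 0 x ⊆ uIcc (0:ℝ) 1 :=
    uIcc_subset_uIcc (by simp) (by rwa [uIcc_of_le zero_le_one])
  have cE := hE.cont
  have cV := hV.cont
  rw [← uIcc_of_le zero_le_one] at cE cV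
  rw [integral_add ((hP.mul_continuousOn cV).mono_set hsub)
    ((hV.1.continuousOn_mul cE).mono_set hsub)] at h1
  rw [intervalIntegral.integral_neg] at h2
  simp only [integral_same, zero_mul, zero_add] at h1
  have h3 : U x - U 0 = -((∫ y in (0:ℝ)..x, P y) * V x) +
      ∫ t in (0:ℝ)..x, (∫ y in (0:ℝ)..t, P y) * -(Q t * U t) := by
    rw [h1, h2]; ring
  have h4 : ‖∫ t in (0:ℝ)..x, (∫ y in (0:ℝ)..t, P y) * -(Q t * U t)‖ ≤ (ε * (K * M)) * |x - 0| := by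
    apply intervalIntegral.norm_integral_le_of_norm_le_const
    intro t ht
    rw [uIoc_of_le hx.1] at ht
    have ht' : t ∈ Icc (0:ℝ) 1 := ⟨ht.1.le, ht.2.trans hx.2⟩
    rw [norm_mul, norm_neg, norm_mul]
    gcongr
    · exact hPε t ht'
    · exact hQK t ht'
    · exact hUM t ht'
  have h5 : (ε * (K * M)) * |x - 0| ≤ ε * (K * M) := by
    apply mul_le_of_le_one_right (by positivity)
    rw [sub_zero, abs_of_nonneg hx.1]; exact hx.2
  have h6 : ‖-((∫ y in (0:ℝ)..x, P y) * V x)‖ ≤ ε * M := by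
    rw [norm_neg, norm_mul]
    gcongr
    · exact hPε x hx
    · exact hVM x hx
  rw [h3]
  refine (norm_add_le _ _).trans ?_
  linarith

lemma final_alg {p q p1 q1 r ρ D η M : ℝ} (hr : 0 ≤ r) (hρ : 0 ≤ ρ) (hq : 0 ≤ q)
    (hD : D = |1 - ρ * r|) (hD0 : 0 < D) (hη : η * ((1 + r) * (1 + ρ) + D) < D)
    (e1 : p = r * q) (e2 : q1 = ρ * p1)
    (h1 : |p1 - p| ≤ η * M) (h2 : |q1 - q| ≤ η * M)
    (hM : M ≤ p + η * M ∨ M ≤ q + η * M) : M ≤ 0 := by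
  have a1 : q * D ≤ (1 + ρ) * (η * M) := by
    have : q * D = |-(q1 - q) + ρ * (p1 - p)| := by
      rw [hD, ← abs_of_nonneg hq, ← abs_mul, abs_of_nonneg hq, e2, e1]; congr 1; ring
    rw [this]
    have := abs_add_le (-(q1 - q)) (ρ * (p1 - p))
    rw [abs_neg, abs_mul, abs_of_nonneg hρ] at this
    nlinarith
  have a2 : M ≤ (1 + r) * q + η * M := by
    rcases hM with h | h
    · rw [e1] at h; nlinarith
    · nlinarith [mul_nonneg hr hq]
  have a3 : D * M ≤ (1 + r) * (q * D) + D * (η * M) := by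
    have := mul_le_mul_of_nonneg_left a2 hD0.le
    linarith
  have a4 : (1 + r) * (q * D) ≤ (1 + r) * ((1 + ρ) * (η * M)) :=
    mul_le_mul_of_nonneg_left a1 (by linarith)
  by_contra hc
  push Not at hc
  have := mul_lt_mul_of_pos_right hη hc
  nlinarith

lemma bdd_int {a : ℝ → ℝ} (ha : Measurable a) {C : ℝ} (h : ∀ x, |a x| ≤ C) (s t : ℝ) :
    IntervalIntegrable a volume s t := by
  refine (intervalIntegrable_const (c := C)).mono_fun ha.aestronglyMeasurable ?_
  exact Eventually.of_forall fun x ↦ (h x).trans (le_abs_self C)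

lemma prim_cont {a : ℝ → ℝ} (ha : Measurable a) {C : ℝ} (h : ∀ x, |a x| ≤ C) :
    Continuous fun x ↦ ∫ y in (0:ℝ)..x, a y :=
  continuous_primitive (fun s t ↦ bdd_int ha h s t) 0

lemma prim_eq {a : ℝ → ℝ} (ha : Measurable a) {C : ℝ} (h : ∀ x, |a x| ≤ C) (z : ℂ) (x : ℝ) :
    ∫ y in (0:ℝ)..x, ((a y : ℂ) + z) = ((∫ y in (0:ℝ)..x, a y : ℝ) : ℂ) + z * x := by
  have h1 : IntervalIntegrable (fun y ↦ (a y : ℂ)) volume 0 x :=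
    ⟨(bdd_int ha h 0 x).1.ofReal, (bdd_int ha h 0 x).2.ofReal⟩
  rw [integral_add h1 intervalIntegrable_const, intervalIntegral.integral_ofReal]
  simp [mul_comm]

/-- exponential weight -/
lemma weight_ac {a : ℝ → ℝ} (ha : Measurable a) {C : ℝ} (h : ∀ x, |a x| ≤ C) (z : ℂ) :
    IsACOn01 (fun x ↦ Complex.exp (((∫ y in (0:ℝ)..x, a y : ℝ) : ℂ) + z * x))
      (fun x ↦ ((a x : ℂ) + z) * Complex.exp (((∫ y in (0:ℝ)..x, a y : ℝ) : ℂ) + z * x)) := by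
  have := isAC_exp (A' := fun x ↦ (a x : ℂ) + z) (by fun_prop) (C := C + ‖z‖) (fun x ↦ by
    refine (norm_add_le _ _).trans ?_
    gcongr
    simpa using h x)
  simpa only [prim_eq ha h] using this

lemma coef_facts {b : ℝ → ℝ} (hb : BoundedVariationOn b (Icc (0:ℝ) 1)) {s : ℝ → ℝ}
    (hs : Continuous s) :
    (∃ K, ∀ x ∈ Icc (0:ℝ) 1, ‖(b x : ℂ) * Complex.exp (s x : ℂ)‖ ≤ K) ∧
      IntervalIntegrable (fun x ↦ (b x : ℂ) * Complex.exp (s x : ℂ)) volume 0 1 := by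
  obtain ⟨⟨B, hB⟩, hi⟩ := bv_facts hb
  have hc : Continuous fun x ↦ Complex.exp (s x : ℂ) := by fun_prop
  constructor
  · obtain ⟨D, hD⟩ := isCompact_Icc.exists_bound_of_continuousOn (s := Icc (0:ℝ) 1) hc.continuousOn
    refine ⟨B * D, fun x hx ↦ ?_⟩
    rw [norm_mul]
    have h0 := (norm_nonneg _).trans (hD x hx)
    have h1 : ‖(b x : ℂ)‖ ≤ B := by simpa using hB x hx
    have h2 := (norm_nonneg _).trans h1
    exact mul_le_mul h1 (hD x hx) (norm_nonneg _) h2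
  · have h1 : IntervalIntegrable (fun y ↦ (b y : ℂ)) volume 0 1 := ⟨hi.1.ofReal, hi.2.ofReal⟩
    exact h1.mul_continuousOn hc.continuousOn

/-- under `a, d ∈ L^∞`, `b, c` of bounded variation and
`|r₀r₁| ≠ e^{α(1)+δ(1)}`, the set of `k ∈ ℤ` for which the homogeneous boundary value
problem `u' + (a + ikω)u + bv = 0`, `v' − (d + ikω)v + cu = 0` a.e. on `(0,1)` with
`u(0) = r₀v(0)`, `v(1) = r₁u(1)` has a nontrivial solution is finite. -/
theorem stmt10 (ω r₀ r₁ : ℝ) (hω : 0 < ω) (a d : ℝ → ℝ)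
    (ha : Measurable a) (hd : Measurable d)
    (Ca Cd : ℝ) (haB : ∀ x, |a x| ≤ Ca) (hdB : ∀ x, |d x| ≤ Cd)
    (b c : ℝ → ℝ)
    (hb : BoundedVariationOn b (Icc (0:ℝ) 1)) (hc : BoundedVariationOn c (Icc (0:ℝ) 1))
    (α δ : ℝ → ℝ)
    (hα : ∀ x, α x = ∫ y in (0:ℝ)..x, a y)
    (hδ : ∀ x, δ x = ∫ y in (0:ℝ)..x, d y)
    (hne : |r₀ * r₁| ≠ Real.exp (α 1 + δ 1)) :
    {k : ℤ | ∃ u v u' v' : ℝ → ℂ,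
      IsACOn01 u u' ∧ IsACOn01 v v' ∧
      (∀ᵐ x ∂(volume.restrict (Ioo (0 : ℝ) 1)),
        u' x + ((a x : ℂ) + (k : ℂ) * (ω : ℂ) * Complex.I) * u x + ((b x : ℝ) : ℂ) * v x = 0) ∧
      (∀ᵐ x ∂(volume.restrict (Ioo (0 : ℝ) 1)),
        v' x - ((d x : ℂ) + (k : ℂ) * (ω : ℂ) * Complex.I) * v x + ((c x : ℝ) : ℂ) * u x = 0) ∧
      u 0 = (r₀ : ℂ) * v 0 ∧ v 1 = (r₁ : ℂ) * u 1 ∧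
      ∃ x ∈ Icc (0:ℝ) 1, u x ≠ 0 ∨ v x ≠ 0}.Finite := by
  set σ : ℝ → ℝ := fun x ↦ α x + δ x with hσ
  have hαe : α = fun x ↦ ∫ y in (0:ℝ)..x, a y := funext hα
  have hδe : δ = fun x ↦ ∫ y in (0:ℝ)..x, d y := funext hδ
  have hσc : Continuous σ := by
    rw [hσ, hαe, hδe]
    exact (prim_cont ha haB).add (prim_cont hd hdB)
  obtain ⟨⟨K1, hK1⟩, hi1⟩ := coef_facts hb hσc
  obtain ⟨⟨K2, hK2⟩, hi2⟩ := coef_facts hc hσc.neg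
  have hK1' : 0 ≤ K1 := (norm_nonneg _).trans (hK1 0 (by simp))
  have hK2' : 0 ≤ K2 := (norm_nonneg _).trans (hK2 0 (by simp))
  set K := max K1 K2 with hK
  have hK0 : 0 ≤ K := hK1'.trans (le_max_left _ _)
  set ρ := |r₁| * Real.exp (-σ 1) with hρ
  have hρ0 : 0 ≤ ρ := by positivity
  set D := |1 - ρ * (|r₀|)| with hD
  have hD0 : 0 < D := by
    rw [hD, abs_pos]
    intro h0
    apply hne
    have h1 : ρ * |r₀| = 1 := by linarith
    rw [hρ, Real.exp_neg] at h1
    have h2 := Real.exp_pos (σ 1)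
    rw [abs_mul]
    change _ = Real.exp (σ 1)
    field_simp at h1
    linarith
  set W := (1 + |r₀|) * (1 + ρ) + D with hW
  have hW0 : 0 < W := by positivity
  set ε := D / (2 * W * (1 + K)) with hε
  have hε0 : 0 < ε := by positivity
  have hη : ε * (1 + K) * W < D := by
    have : ε * (1 + K) * W = D / 2 := by rw [hε]; field_simp
    rw [this]; linarith
  have e1 := rl_unif hi1 hK1 (c := 2 * ω) (by positivity) hε0
  have e2 := rl_unif hi2 hK2 (c := -(2 * ω)) (neg_ne_zero.2 (by positivity)) hε0
  have hfin := e1.and e2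
  rw [Filter.eventually_cofinite] at hfin
  refine hfin.subset ?_
  rintro k ⟨u, v, u', v', hu, hv, equ, eqv, bc0, bc1, x₀, hx₀, hnz⟩ ⟨R1, R2⟩
  set z : ℂ := (k : ℂ) * (ω : ℂ) * Complex.I with hz
  rw [ae_Ioo] at equ eqv
  have wE := weight_ac ha haB z
  have wG := weight_ac (a := fun x ↦ - d x) hd.neg (C := Cd) (by simpa using hdB) (-z)
  simp only [intervalIntegral.integral_neg, ← hα, ← hδ] at wE wG
  set E : ℝ → ℂ := fun x ↦ Complex.exp ((α x : ℂ) + z * x) with hE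
  set G : ℝ → ℂ := fun x ↦ Complex.exp (((-δ x : ℝ) : ℂ) + -z * x) with hG
  set P : ℝ → ℂ := fun y ↦ (b y : ℂ) * Complex.exp (σ y : ℂ) *
    Complex.exp ((k:ℂ) * (2 * ω : ℝ) * Complex.I * y) with hP
  set Q : ℝ → ℂ := fun y ↦ (c y : ℂ) * Complex.exp ((-σ) y : ℝ) *
    Complex.exp ((k:ℂ) * (-(2 * ω) : ℝ) * Complex.I * y) with hQ
  have PG : ∀ x, P x * G x = b x * E x := by
    intro x
    simp only [hP, hG, hE, mul_assoc, ← Complex.exp_add]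
    congr 2
    simp only [hσ, hz]; push_cast; ring
  have QE : ∀ x, Q x * E x = c x * G x := by
    intro x
    simp only [hQ, hG, hE, mul_assoc, ← Complex.exp_add]
    congr 2
    simp only [hσ, hz, Pi.neg_apply]; push_cast; ring
  have hU : IsACOn01 (fun x ↦ E x * u x) (fun x ↦ -(P x * (G x * v x))) := by
    refine (wE.mul hu).congr ?_
    filter_upwards [equ] with x hx hx'
    rw [← mul_assoc, PG]
    linear_combination E x * hx hx'
  have hV : IsACOn01 (fun x ↦ G x * v x) (fun x ↦ -(Q x * (E x * u x))) := by
    refine (wG.mul hv).congr ?_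
    filter_upwards [eqv] with x hx hx'
    rw [← mul_assoc, QE]
    have hGx : Complex.exp (((-δ x : ℝ) : ℂ) + -z * x) = G x := rfl
    rw [hGx, Complex.ofReal_neg (d x)]
    linear_combination G x * hx hx'
  set U : ℝ → ℂ := fun x ↦ E x * u x with hUd
  set V : ℝ → ℂ := fun x ↦ G x * v x with hVd
  have hPi : IntervalIntegrable P volume 0 1 := osc_int hi1 k (2 * ω)
  have hQi : IntervalIntegrable Q volume 0 1 := osc_int hi2 k (-(2 * ω))
  have hPK : ∀ x ∈ Icc (0:ℝ) 1, ‖P x‖ ≤ K := fun x hx ↦ by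
    simp only [hP]
    rw [norm_mul _ (Complex.exp ((k:ℂ) * _ * _ * _)), norm_osc, mul_one]
    exact (hK1 x hx).trans (le_max_left _ _)
  have hQK : ∀ x ∈ Icc (0:ℝ) 1, ‖Q x‖ ≤ K := fun x hx ↦ by
    simp only [hQ]
    rw [norm_mul _ (Complex.exp ((k:ℂ) * _ * _ * _)), norm_osc, mul_one]
    exact (hK2 x hx).trans (le_max_right _ _)
  obtain ⟨x₁, hx₁, hmax⟩ := isCompact_Icc.exists_isMaxOn (s := Icc (0:ℝ) 1) ⟨0, by simp⟩
    (hU.cont.norm.sup hV.cont.norm)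
  set M := max ‖U x₁‖ ‖V x₁‖ with hM
  have hUM : ∀ x ∈ Icc (0:ℝ) 1, ‖U x‖ ≤ M := fun x hx ↦ (le_max_left _ ‖V x‖).trans (hmax hx)
  have hVM : ∀ x ∈ Icc (0:ℝ) 1, ‖V x‖ ≤ M := fun x hx ↦ (le_max_right ‖U x‖ _).trans (hmax hx)
  have dU := half_est hPi hU hV hQK hε0.le R1 hUM hVM
  have dV := half_est hQi hV hU hPK hε0.le R2 hVM hUM
  have one : (1:ℝ) ∈ Icc (0:ℝ) 1 := by simp
  have α0 : α 0 = 0 := by simp [hα]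
  have δ0 : δ 0 = 0 := by simp [hδ]
  have nE : ∀ x, ‖E x‖ = Real.exp (α x) := fun x ↦ by
    simp [hE, hz, Complex.norm_exp]
  have nG : ∀ x, ‖G x‖ = Real.exp (-δ x) := fun x ↦ by
    simp [hG, hz, Complex.norm_exp]
  have b0 : ‖U 0‖ = |r₀| * ‖V 0‖ := by
    simp only [hUd, hVd, norm_mul, nE, nG, bc0, α0, δ0]
    simp
  have b1 : ‖V 1‖ = ρ * ‖U 1‖ := by
    simp only [hUd, hVd, norm_mul, nE, nG, bc1, hρ, hσ]
    have : Real.exp (-(α 1 + δ 1)) * Real.exp (α 1) = Real.exp (-δ 1) := by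
      rw [← Real.exp_add]; congr 1; ring
    rw [← this]
    simp only [Complex.norm_real, Real.norm_eq_abs]
    ring
  have hM' : M ≤ ‖U 0‖ + ε * (1 + K) * M ∨ M ≤ ‖V 0‖ + ε * (1 + K) * M := by
    rcases le_total ‖U x₁‖ ‖V x₁‖ with h | h
    · right
      have h1 : M = ‖V x₁‖ := max_eq_right h
      have h2 := norm_sub_norm_le (V x₁) (V 0)
      have h3 := dV x₁ hx₁
      linarith
    · left
      have h1 : M = ‖U x₁‖ := max_eq_left h
      have h2 := norm_sub_norm_le (U x₁) (U 0)
      have h3 := dU x₁ hx₁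
      linarith
  have hMle := final_alg (abs_nonneg r₀) hρ0 (norm_nonneg (V 0)) hD hD0 hη b0 b1
    ((abs_norm_sub_norm_le _ _).trans (dU 1 one)) ((abs_norm_sub_norm_le _ _).trans (dV 1 one)) hM'
  have uz : U x₀ = 0 := norm_le_zero_iff.1 ((hUM x₀ hx₀).trans hMle)
  have vz : V x₀ = 0 := norm_le_zero_iff.1 ((hVM x₀ hx₀).trans hMle)
  rcases hnz with h | h
  · exact (mul_ne_zero (Complex.exp_ne_zero _) h) uz
  · exact (mul_ne_zero (Complex.exp_ne_zero _) h) vz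
end
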